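/- Assume additionally that K has characteristic 0, n ≥ 5, and d = n − 1. Then the set of K-points (a,c) of the affine curve y^{n−1} = f(x) that are torsion points of order exactly n (i.e., n is the least positive integer with m_{(a,c)}^n principal) has cardinality either 0 or n − 1. -/

import Mathlib

open Polynomial

/-- The affine coordinate ring `A = K[X,Y]/(Y^d − f(X))` of the curve `y^d = f(x)`,
realized as `AdjoinRoot` of the polynomial `Y^d - f(X)` over `K[X]`. -/
noncomputable abbrev CurveRing (K : Type*) [Field K] (d : ℕ) (f : K[X]) : Type _ :=
  AdjoinRoot ((X : K[X][X]) ^ d - C f)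

/-- The maximal ideal `m_{(a,c)} = (X - a, Y - c)` of the coordinate ring. -/
noncomputable def ptIdeal {K : Type*} [Field K] (d : ℕ) (f : K[X]) (a c : K) :
    Ideal (CurveRing K d f) :=
  Ideal.span {AdjoinRoot.of _ (X - C a), AdjoinRoot.root _ - AdjoinRoot.of _ (C c)}

/-- `P = (a,c)` is a torsion point of order `m` on the Jacobian: `m` is the least
positive integer such that `m_P ^ m` is a principal ideal of `A`. -/
def IsTorsionOfOrder {K : Type*} [Field K] (d : ℕ) (f : K[X]) (a c : K) (m : ℕ) : Prop :=
  IsLeast {k : ℕ | 0 < k ∧ (ptIdeal d f a c ^ k).IsPrincipal} m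

/-!
Let `m` be the ideal of `P = (a, c)`. Its relative norm to `K[X]` is `(X - a)`, so a generator `g`
of `m ^ k` has norm `(X - a) ^ k` up to a constant. The degree of the norm of `∑ p_i y ^ i` is its
pole order at infinity: since `d` and `deg f` are coprime, the orders `d * deg p_i + i * deg f` of
the nonzero terms are distinct, and the largest one wins. Functions of pole order less than
`deg f` are therefore polynomials in `x`, which rules out `k < deg f` unless `c = 0`. When
`deg f = d + 1`, those of pole order `d + 1` are multiples of `l - y` with `l` affine, and taking
norms shows that `P` has order `d + 1` exactly when `c ≠ 0` and
`f = ν (X - a) ^ (d + 1) + l ^ d` for some constant `ν` and some affine `l` with `l(a) = c`.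

Here `a` is determined by `f`. Given two such representations, with `a` and `b`, comparing
coefficients identifies the moments of a measure with two atoms with those of a nonzero multiple
of the uniform measure between `-b` and `-a`. The `3 × 3` Hankel determinant vanishes for the
former, while for the latter it is a nonzero multiple of `(b - a) ^ 9`. It uses the moments up to
degree `4`, whence `d ≥ 4`. So the points of order `d + 1`, if there are any, are the points
`(a, η c)` with `η ^ d = 1`.
-/

theorem natDegree_sum_eq_of_forall_degree_lt {R ι : Type*} [Semiring R] {s : Finset ι}
    {t : ι → R[X]} {i : ι} (hi : i ∈ s)
    (hlt : ∀ j ∈ s, j ≠ i → (t j).degree < (t i).degree) :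
    (∑ j ∈ s, t j).natDegree = (t i).natDegree := by
  classical
  rw [← Finset.add_sum_erase s t hi]
  rcases (s.erase i).eq_empty_or_nonempty with hs | ⟨j, hj⟩
  · rw [hs, Finset.sum_empty, add_zero]
  have hbot : ⊥ < (t i).degree :=
    bot_le.trans_lt (hlt j (Finset.mem_of_mem_erase hj) (Finset.ne_of_mem_erase hj))
  refine natDegree_add_eq_left_of_degree_lt ((degree_sum_le _ _).trans_lt ?_)
  exact (Finset.sup_lt_iff hbot).2 fun j hj ↦
    hlt j (Finset.mem_of_mem_erase hj) (Finset.ne_of_mem_erase hj)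

section DominantPermutation

variable {R ι : Type*} [CommRing R] [IsDomain R] [Fintype ι] {M : Matrix ι ι R[X]}
  {σ : Equiv.Perm ι} {D : ℕ} {u : ι → ℕ}

-- The row potential `u` contributes the same amount to the weighted degree of every permutation
-- product, so the weighted comparison of entries becomes a comparison of degrees.
theorem degree_prod_lt_of_dominant_perm (hσ : ∀ j, M (σ j) j ≠ 0)
    (hdom : ∀ r j, r ≠ σ j → M r j ≠ 0 →
      D * (M r j).natDegree + u r < D * (M (σ j) j).natDegree + u (σ j))
    {τ : Equiv.Perm ι} (hτσ : τ ≠ σ) :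
    (∏ j, M (τ j) j).degree < (∏ j, M (σ j) j).degree := by
  have hσ_prod : ∏ j, M (σ j) j ≠ 0 := Finset.prod_ne_zero_iff.2 fun j _ ↦ hσ j
  by_cases hτ_prod : ∏ j, M (τ j) j = 0
  · rw [hτ_prod, degree_zero]
    exact bot_lt_iff_ne_bot.2 (degree_ne_bot.2 hσ_prod)
  have hτ (j) : M (τ j) j ≠ 0 := Finset.prod_ne_zero_iff.1 hτ_prod j (Finset.mem_univ j)
  have hle (j) : D * (M (τ j) j).natDegree + u (τ j) ≤
      D * (M (σ j) j).natDegree + u (σ j) := by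
    by_cases h : τ j = σ j
    · rw [h]
    · exact (hdom _ j h (hτ j)).le
  obtain ⟨j, hj⟩ := DFunLike.ne_iff.1 hτσ
  have hsum : ∑ j, (D * (M (τ j) j).natDegree + u (τ j)) <
      ∑ j, (D * (M (σ j) j).natDegree + u (σ j)) :=
    Finset.sum_lt_sum (fun j _ ↦ hle j) ⟨j, Finset.mem_univ j, hdom _ j hj (hτ j)⟩
  rw [Finset.sum_add_distrib, Finset.sum_add_distrib, Equiv.sum_comp τ u, Equiv.sum_comp σ u,
    ← Finset.mul_sum, ← Finset.mul_sum] at hsum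
  refine degree_lt_degree ?_
  rw [natDegree_prod _ _ fun j _ ↦ hτ j, natDegree_prod _ _ fun j _ ↦ hσ j]
  exact lt_of_mul_lt_mul_left (Nat.lt_of_add_lt_add_right hsum) D.zero_le

theorem natDegree_det_eq_of_dominant_perm [DecidableEq ι] (hσ : ∀ j, M (σ j) j ≠ 0)
    (hdom : ∀ r j, r ≠ σ j → M r j ≠ 0 →
      D * (M r j).natDegree + u r < D * (M (σ j) j).natDegree + u (σ j)) :
    M.det.natDegree = ∑ j, (M (σ j) j).natDegree := by
  have hsign (τ : Equiv.Perm ι) :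
      (τ.sign • ∏ j, M (τ j) j).degree = (∏ j, M (τ j) j).degree := by
    rcases Int.units_eq_one_or τ.sign with h | h <;> simp [h]
  have hdet : M.det.natDegree = (σ.sign • ∏ j, M (σ j) j).natDegree := by
    rw [Matrix.det_apply]
    refine natDegree_sum_eq_of_forall_degree_lt (Finset.mem_univ σ) fun τ _ hτ ↦ ?_
    rw [hsign, hsign]
    exact degree_prod_lt_of_dominant_perm hσ hdom hτ
  rw [hdet, natDegree_eq_of_degree_eq (hsign σ), natDegree_prod _ _ fun j _ ↦ hσ j]

end DominantPermutation

theorem norm_algebraMap_sub_root {R : Type*} [CommRing R] {g : R[X]} (hg : g.Monic) (r : R) :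
    Algebra.norm R (algebraMap R (AdjoinRoot g) r - AdjoinRoot.root g) = g.eval r := by
  nontriviality R
  let B := AdjoinRoot.powerBasis' hg
  let M := Algebra.leftMulMatrix B.basis (AdjoinRoot.root g)
  have hroot : aeval (AdjoinRoot.root g) M.charpoly = 0 := by
    apply Algebra.leftMulMatrix_injective B.basis
    rw [← aeval_algHom_apply, Matrix.aeval_self_charpoly, map_zero]
  have hchar : M.charpoly = g := by
    refine (eq_of_monic_of_dvd_of_natDegree_le hg M.charpoly_monic ?_ ?_)
    · rwa [AdjoinRoot.aeval_eq, AdjoinRoot.mk_eq_zero] at hroot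
    · rw [M.charpoly_natDegree_eq_dim, Fintype.card_fin, AdjoinRoot.powerBasis'_dim]
  calc Algebra.norm R (algebraMap R (AdjoinRoot g) r - AdjoinRoot.root g)
      = (Matrix.scalar _ r - M).det := by
        rw [Algebra.norm_eq_matrix_det B.basis, map_sub, AlgHom.commutes]
        rfl
    _ = g.eval r := by rw [← Matrix.eval_charpoly, hchar]

section RelNorm

variable {R S : Type*} [CommRing R] [IsDedekindDomain R] [CommRing S] [IsDedekindDomain S]
  [Algebra R S] [Module.Finite R S] {P : Ideal S}

theorem relNorm_eq_of_surjective [Module.IsTorsionFree R S] [PerfectField (FractionRing R)]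
    [P.IsMaximal] (p : Ideal R) [p.IsMaximal] [P.LiesOver p]
    (hsurj : Function.Surjective (algebraMap R (S ⧸ P))) : Ideal.relNorm R P = p := by
  let := Ideal.Quotient.field p
  have hquot : Function.Surjective (algebraMap (R ⧸ p) (S ⧸ P)) := fun x ↦
    (hsurj x).imp' (Ideal.Quotient.mk p) fun r hr ↦ hr
  have hrank : Module.finrank (R ⧸ p) (S ⧸ P) = 1 :=
    Algebra.finrank_eq_one_iff_bijective_algebraMap.2 ⟨FaithfulSMul.algebraMap_injective _ _, hquot⟩
  rw [Ideal.relNorm_eq_pow_of_isMaximal P p, Ideal.inertiaDeg_eq_of_isMaximal p, hrank, pow_one]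

theorem eq_pow_of_relNorm_eq_pow [Module.IsTorsionFree R S] [P.IsPrime]
    (hP : Prime (Ideal.relNorm R P)) {I : Ideal S} {k N : ℕ} (hle : P ^ N ≤ I)
    (hI : Ideal.relNorm R I = Ideal.relNorm R P ^ k) : I = P ^ k := by
  have hbot : P ≠ ⊥ := fun h ↦ hP.ne_zero (Ideal.relNorm_eq_bot_iff.2 h)
  obtain ⟨m, -, hm⟩ :=
    (dvd_prime_pow (Ideal.prime_of_isPrime hbot ‹_›) N).1 (Ideal.dvd_iff_le.2 hle)
  rw [associated_iff_eq] at hm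
  rw [hm, map_pow] at hI
  rw [hm, (pow_inj_of_not_isUnit hP.not_isUnit hP.ne_zero).1 hI]

theorem relNorm_span_singleton_eq_norm [Module.Free R S] (g : S) :
    Ideal.relNorm R (Ideal.span {g}) = Ideal.span {Algebra.norm R g} := by
  rw [Ideal.relNorm_singleton, Algebra.intNorm_eq_norm]

end RelNorm

theorem sup_span_singleton_pow_le {R : Type*} [CommRing R] {I J : Ideal R} {u : R} {m : ℕ}
    (hI : I ≤ J) (hu : u ^ m ∈ J) : (I ⊔ Ideal.span {u}) ^ (1 + m) ≤ J := by
  refine Ideal.sup_pow_add_le_pow_sup_pow.trans (sup_le ?_ ?_)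
  · rwa [pow_one]
  · rwa [Ideal.span_singleton_pow, Ideal.span_singleton_le_iff_mem]

section Uniqueness

/-- The determinant of the `3 × 3` Hankel matrix of a moment sequence `m`. -/
def hankelDet {R : Type*} [CommRing R] (m : ℕ → R) : R :=
  (Matrix.of fun i j : Fin 3 ↦ m (i + j)).det

theorem hankelDet_eq {R : Type*} [CommRing R] (m : ℕ → R) :
    hankelDet m = m 0 * m 2 * m 4 - m 0 * m 3 ^ 2 - m 1 ^ 2 * m 4 + 2 * m 1 * m 2 * m 3 -
      m 2 ^ 3 := by
  rw [hankelDet, Matrix.det_fin_three]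
  change m 0 * m 2 * m 4 - m 0 * m 3 * m 3 - m 1 * m 1 * m 4 + m 1 * m 3 * m 2 + m 2 * m 1 * m 3 -
    m 2 * m 2 * m 2 = _
  ring

theorem hankelDet_congr {R : Type*} [CommRing R] {m m' : ℕ → R} (h : ∀ j ≤ 4, m j = m' j) :
    hankelDet m = hankelDet m' := by
  rw [hankelDet_eq, hankelDet_eq, h 0 (by decide), h 1 (by decide), h 2 (by decide),
    h 3 (by decide), h 4 le_rfl]

theorem hankelDet_two_atoms {R : Type*} [CommRing R] (u α β v γ δ : R) :
    hankelDet (fun j ↦ u * (α ^ (4 - j) * β ^ j) - v * (γ ^ (4 - j) * δ ^ j)) = 0 := by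
  rw [hankelDet_eq]
  ring

variable {K : Type*} [Field K]

theorem hankelDet_uniform [CharZero K] (ν s t : K) :
    hankelDet (fun j ↦ ν * ((s ^ (j + 1) - t ^ (j + 1)) / (j + 1))) =
      ν ^ 3 * (s - t) ^ 9 / 2160 := by
  rw [hankelDet_eq]
  push_cast
  field_simp
  ring

theorem coeff_C_mul_X_add_C_pow {R : Type*} [CommSemiring R] (α β : R) (d k : ℕ) :
    ((C α * X + C β) ^ d).coeff k = β ^ (d - k) * d.choose k * α ^ k := by
  have h : (C α * X + C β) ^ d = ((X + C β) ^ d).comp (C α * X) := by simp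
  rw [h, comp_C_mul_X_coeff, coeff_X_add_C_pow]

-- Compare coefficients of `X ^ (d - j)`: the factor `choose d j` cancels, since
-- `(j + 1) * choose (d + 1) (j + 1) = (d + 1) * choose d j`. The right-hand side is
-- `ν * (d + 1)` times the integral of `x ^ j` from `-b` to `-a`.
theorem moment_eq_of_X_sub_C_pow_add_linear_pow_eq [CharZero K] {d : ℕ} {ν a b α β γ δ : K}
    (h : C ν * (X - C a) ^ (d + 1) + (C α * X + C β) ^ d =
      C ν * (X - C b) ^ (d + 1) + (C γ * X + C δ) ^ d) {j : ℕ} (hj : j ≤ d) :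
    γ ^ (d - j) * δ ^ j - α ^ (d - j) * β ^ j =
      ν * (d + 1) * (((-a) ^ (j + 1) - (-b) ^ (j + 1)) / (j + 1)) := by
  simp only [sub_eq_add_neg X, ← C_neg] at h
  have hcoeff := congrArg (coeff · (d - j)) h
  have hexp : d + 1 - (d - j) = j + 1 := by omega
  have hchoose : (d + 1).choose (d - j) = (d + 1).choose (j + 1) := by
    rw [← hexp, Nat.choose_symm (by omega)]
  simp only [coeff_add, coeff_C_mul, coeff_X_add_C_pow, coeff_C_mul_X_add_C_pow, hexp, hchoose,
    Nat.choose_symm hj, Nat.sub_sub_self hj] at hcoeff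
  have hsucc : ((d : K) + 1) * d.choose j = (d + 1).choose (j + 1) * (j + 1) := by
    exact_mod_cast Nat.add_one_mul_choose_eq d j
  have hne : (d.choose j : K) ≠ 0 := by exact_mod_cast (Nat.choose_pos hj).ne'
  have hj₁ : (j : K) + 1 ≠ 0 := j.cast_add_one_ne_zero
  field_simp
  apply mul_left_cancel₀ hne
  linear_combination -ν * ((-a) ^ (j + 1) - (-b) ^ (j + 1)) * hsucc - ((j : K) + 1) * hcoeff

theorem eq_of_X_sub_C_pow_add_linear_pow_eq [CharZero K] {d : ℕ} (hd : 4 ≤ d)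
    {ν a b α β γ δ : K} (hν : ν ≠ 0) (h : C ν * (X - C a) ^ (d + 1) + (C α * X + C β) ^ d =
      C ν * (X - C b) ^ (d + 1) + (C γ * X + C δ) ^ d) : a = b := by
  obtain ⟨e, rfl⟩ := Nat.exists_eq_add_of_le' hd
  have hmoment (j : ℕ) (hj : j ≤ 4) :
      γ ^ e * (γ ^ (4 - j) * δ ^ j) - α ^ e * (α ^ (4 - j) * β ^ j) =
        ν * ((e + 4 : ℕ) + 1) * (((-a) ^ (j + 1) - (-b) ^ (j + 1)) / (j + 1)) := by
    rw [← moment_eq_of_X_sub_C_pow_add_linear_pow_eq h (hj.trans hd), ← mul_assoc, ← mul_assoc,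
      ← pow_add, ← pow_add, ← Nat.add_sub_assoc hj]
  have hdet := hankelDet_congr hmoment
  rw [hankelDet_two_atoms, hankelDet_uniform] at hdet
  have hν' : ν * ((e + 4 : ℕ) + 1) ≠ 0 := mul_ne_zero hν (Nat.cast_add_one_ne_zero _)
  have hab : -a - -b = 0 := by
    rwa [eq_comm, div_eq_zero_iff, or_iff_left (by norm_num),
      mul_eq_zero_iff_left (pow_ne_zero _ hν'), pow_eq_zero_iff (by norm_num)] at hdet
  exact neg_injective (sub_eq_zero.1 hab)

theorem eq_C_coeff_mul_X_sub_C_pow_add_pow {R : Type*} [CommRing R] [IsDomain R] {d : ℕ} {a : R}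
    {f l : R[X]} (hl : l.natDegree ≤ 1) (h : Associated (f - l ^ d) ((X - C a) ^ (d + 1))) :
    f = C (f.coeff (d + 1)) * (X - C a) ^ (d + 1) + l ^ d := by
  obtain ⟨u, hu⟩ := h.symm
  obtain ⟨r, -, hr⟩ := isUnit_iff.1 u.isUnit
  have hf : f = C r * (X - C a) ^ (d + 1) + l ^ d := by
    rw [hr, mul_comm, hu, sub_add_cancel]
  have hlead : ((X - C a) ^ (d + 1)).coeff (d + 1) = 1 := by
    simpa [natDegree_pow] using ((monic_X_sub_C a).pow (d + 1)).coeff_natDegree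
  have hpow : (l ^ d).coeff (d + 1) = 0 :=
    coeff_eq_zero_of_natDegree_lt <| (natDegree_pow_le_of_le d hl).trans_lt (by omega)
  have hcoeff : f.coeff (d + 1) = r := by
    rw [hf, coeff_add, coeff_C_mul, hlead, hpow, mul_one, add_zero]
  rwa [hcoeff]

end Uniqueness

namespace CurveRing

variable {K : Type*} [Field K] {d : ℕ} {f : K[X]}

theorem root_pow : (AdjoinRoot.root (X ^ d - C f : K[X][X])) ^ d =
    algebraMap K[X] (CurveRing K d f) f := by
  have h := AdjoinRoot.eval₂_root (X ^ d - C f : K[X][X])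
  rwa [eval₂_sub, eval₂_X_pow, eval₂_C, sub_eq_zero] at h

/-- The `K[X]`-basis `1, y, …, y ^ (d - 1)` of the coordinate ring. -/
noncomputable def basis (K : Type*) [Field K] (d : ℕ) [NeZero d] (f : K[X]) :
    Module.Basis (Fin d) K[X] (CurveRing K d f) :=
  (AdjoinRoot.powerBasis' (monic_X_pow_sub_C f (NeZero.ne d))).basis.reindex
    (finCongr natDegree_X_pow_sub_C)

theorem basis_apply [NeZero d] (i : Fin d) : basis K d f i = AdjoinRoot.root _ ^ (i : ℕ) := by
  simp only [basis, Module.Basis.reindex_apply, PowerBasis.basis_eq_pow, AdjoinRoot.powerBasis'_gen]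
  rfl

theorem basis_mul_basis [NeZero d] (i j : Fin d) : basis K d f i * basis K d f j =
    (if (i + j : ℕ) < d then 1 else f : K[X]) • basis K d f (i + j) := by
  rw [basis_apply, basis_apply, basis_apply, ← pow_add, Fin.val_add_eq_ite]
  split_ifs with hlt hle hle
  · omega
  · rw [one_smul]
  · rw [Algebra.smul_def, ← root_pow, ← pow_add, Nat.add_sub_cancel' hle]
  · omega

theorem leftMulMatrix_basis [NeZero d] (g : CurveRing K d f) (r j : Fin d) :
    Algebra.leftMulMatrix (basis K d f) g r j =
      (if ((r - j : Fin d) + j : ℕ) < d then 1 else f) * (basis K d f).repr g (r - j) := by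
  rw [Algebra.leftMulMatrix_eq_repr_mul]
  conv_lhs => rw [← (basis K d f).sum_repr g, Finset.sum_mul]
  simp only [smul_mul_assoc, basis_mul_basis, map_sum, map_smul, Module.Basis.repr_self,
    Finsupp.coe_finsetSum, Finset.sum_apply, Finsupp.smul_apply, Finsupp.single_apply,
    smul_eq_mul, ← eq_sub_iff_add_eq]
  rw [Finset.sum_eq_single (r - j) (fun i _ hi ↦ by simp [hi]) (by simp), if_pos rfl, mul_one,
    mul_comm]

instance [NeZero d] : Module.Free K[X] (CurveRing K d f) := .of_basis (basis K d f)

instance [NeZero d] : Module.Finite K[X] (CurveRing K d f) := .of_basis (basis K d f)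

/-- The pole order at infinity of the term `p_i y^i` in the expansion `g = ∑ p_i y^i`; it is a
junk value when `p_i = 0`. -/
noncomputable def termPoleOrder [NeZero d] (g : CurveRing K d f) (i : Fin d) : ℕ :=
  d * ((basis K d f).repr g i).natDegree + f.natDegree * i

theorem natDegree_leftMulMatrix_add [NeZero d] (hf : f ≠ 0) (g : CurveRing K d f) {r j : Fin d}
    (hg : (basis K d f).repr g (r - j) ≠ 0) :
    d * (Algebra.leftMulMatrix (basis K d f) g r j).natDegree + f.natDegree * r =
      termPoleOrder g (r - j) + f.natDegree * j := by
  have hval : (r : ℕ) = if d ≤ (r - j : Fin d) + j then (r - j : Fin d) + (j : ℕ) - d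
      else (r - j : Fin d) + j := by
    rw [← Fin.val_add_eq_ite, sub_add_cancel]
  rw [leftMulMatrix_basis, termPoleOrder]
  split_ifs with hlt
  · rw [if_neg hlt.not_ge] at hval
    rw [one_mul, hval]
    ring
  · rw [not_lt] at hlt
    rw [if_pos hlt] at hval
    have hadd : (r - j : Fin d) + (j : ℕ) = r + d := by omega
    rw [natDegree_mul hf hg, add_assoc (d * _), ← mul_add f.natDegree, hadd]
    ring

theorem termPoleOrder_injective [NeZero d] (hcop : d.Coprime f.natDegree) (g : CurveRing K d f) :
    Function.Injective (termPoleOrder g) := by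
  intro i j hij
  have hmod : f.natDegree * i ≡ f.natDegree * j [MOD d] := by
    have h : termPoleOrder g i ≡ termPoleOrder g j [MOD d] := by rw [hij]
    simpa only [termPoleOrder, Nat.ModEq, Nat.mul_add_mod] using h
  exact Fin.ext ((Nat.ModEq.cancel_left_of_coprime hcop hmod).eq_of_lt_of_lt i.is_lt j.is_lt)

theorem natDegree_norm_eq_termPoleOrder [NeZero d] (hf : f ≠ 0) (hcop : d.Coprime f.natDegree)
    (g : CurveRing K d f) {i : Fin d} (hi : (basis K d f).repr g i ≠ 0)
    (hmax : ∀ j, (basis K d f).repr g j ≠ 0 → termPoleOrder g j ≤ termPoleOrder g i) :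
    (Algebra.norm K[X] g).natDegree = termPoleOrder g i := by
  let M := Algebra.leftMulMatrix (basis K d f) g
  have hM (r j : Fin d) : M r j = _ := leftMulMatrix_basis g r j
  have hdeg (j : Fin d) : d * (M (i + j) j).natDegree + f.natDegree * (i + j : Fin d) =
      termPoleOrder g i + f.natDegree * j := by
    rw [natDegree_leftMulMatrix_add hf g (by rwa [add_sub_cancel_right]), add_sub_cancel_right]
  have hdet : M.det.natDegree = ∑ j, (M (i + j) j).natDegree := by
    refine natDegree_det_eq_of_dominant_perm (σ := Equiv.addLeft i) (D := d)
      (u := fun r ↦ f.natDegree * r) (fun j ↦ ?_) fun r j hr hrj ↦ ?_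
    · change M (i + j) j ≠ 0
      rw [hM, add_sub_cancel_right]
      exact mul_ne_zero (by split_ifs <;> simp [hf]) hi
    · have hrepr := right_ne_zero_of_mul (hM r j ▸ hrj)
      have hne : r - j ≠ i := fun h ↦ hr (sub_eq_iff_eq_add.1 h)
      rw [natDegree_leftMulMatrix_add hf g hrepr, Equiv.coe_addLeft, hdeg]
      exact Nat.add_lt_add_right
        ((hmax _ hrepr).lt_of_ne ((termPoleOrder_injective hcop g).ne hne)) _
  have hsum : d * ∑ j, (M (i + j) j).natDegree = d * termPoleOrder g i := by
    have hshift : ∑ j, f.natDegree * (i + j : Fin d) = ∑ j : Fin d, f.natDegree * (j : ℕ) :=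
      Equiv.sum_comp (Equiv.addLeft i) fun r : Fin d ↦ f.natDegree * (r : ℕ)
    have h := Finset.sum_congr rfl fun j (_ : j ∈ Finset.univ) ↦ hdeg j
    rw [Finset.sum_add_distrib, Finset.sum_add_distrib, Finset.sum_const, Finset.card_univ,
      Fintype.card_fin, smul_eq_mul, ← Finset.mul_sum, hshift] at h
    exact Nat.add_right_cancel h
  rw [Algebra.norm_eq_matrix_det (basis K d f), hdet]
  exact Nat.eq_of_mul_eq_mul_left (NeZero.pos d) hsum

theorem termPoleOrder_le_natDegree_norm [NeZero d] (hf : f ≠ 0) (hcop : d.Coprime f.natDegree)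
    (g : CurveRing K d f) {i : Fin d} (hi : (basis K d f).repr g i ≠ 0) :
    termPoleOrder g i ≤ (Algebra.norm K[X] g).natDegree := by
  obtain ⟨k, hk, hmax⟩ := Set.exists_max_image {j | (basis K d f).repr g j ≠ 0} (termPoleOrder g)
    (Set.toFinite _) ⟨i, hi⟩
  rw [natDegree_norm_eq_termPoleOrder hf hcop g hk hmax]
  exact hmax i hi

theorem repr_eq_zero_of_natDegree_norm_lt [NeZero d] (hf : f ≠ 0) (hcop : d.Coprime f.natDegree)
    {g : CurveRing K d f} {i : Fin d} (hg : (Algebra.norm K[X] g).natDegree < f.natDegree * i) :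
    (basis K d f).repr g i = 0 := by
  by_contra hi
  exact hg.not_ge (le_add_self.trans (termPoleOrder_le_natDegree_norm hf hcop g hi))

theorem eq_algebraMap_of_natDegree_norm_lt [NeZero d] (hf : f ≠ 0) (hcop : d.Coprime f.natDegree)
    {g : CurveRing K d f} (hg : (Algebra.norm K[X] g).natDegree < f.natDegree) :
    g = algebraMap K[X] _ ((basis K d f).repr g 0) := by
  have hrepr (i : Fin d) (hi : i ≠ 0) : (basis K d f).repr g i = 0 :=
    repr_eq_zero_of_natDegree_norm_lt hf hcop <|
      hg.trans_le (Nat.le_mul_of_pos_right _ (Fin.pos_iff_ne_zero.2 hi))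
  conv_lhs => rw [← (basis K d f).sum_repr g]
  rw [Fintype.sum_eq_single 0 fun i hi ↦ by rw [hrepr i hi, zero_smul], basis_apply,
    Fin.val_zero, pow_zero, Algebra.algebraMap_eq_smul_one]

theorem exists_eq_add_mul_root_of_natDegree_norm_le [NeZero d] (hd : 2 ≤ d) (hf : f ≠ 0)
    (hcop : d.Coprime f.natDegree) {g : CurveRing K d f}
    (hg : (Algebra.norm K[X] g).natDegree ≤ f.natDegree) :
    ∃ (p : K[X]) (γ : K), d * p.natDegree ≤ f.natDegree ∧
      g = algebraMap K[X] _ p + algebraMap K[X] _ (C γ) * AdjoinRoot.root _ := by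
  have hn : 0 < f.natDegree := Nat.pos_of_ne_zero fun h ↦ by
    rw [h, Nat.coprime_zero_right] at hcop
    omega
  let i₁ : Fin d := ⟨1, hd⟩
  have hdeg (i : Fin d) :
      d * ((basis K d f).repr g i).natDegree + f.natDegree * i ≤ f.natDegree ∨
        (basis K d f).repr g i = 0 :=
    or_iff_not_imp_right.2 fun hi ↦ (termPoleOrder_le_natDegree_norm hf hcop g hi).trans hg
  have hrepr (i : Fin d) (hi : i ≠ 0 ∧ i ≠ i₁) : (basis K d f).repr g i = 0 := by
    refine repr_eq_zero_of_natDegree_norm_lt hf hcop (hg.trans_lt ?_)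
    have hi₀ := Fin.val_ne_of_ne hi.1
    have hi₁ : (i : ℕ) ≠ 1 := Fin.val_ne_of_ne hi.2
    rw [Fin.val_zero] at hi₀
    exact lt_mul_of_one_lt_right hn (by omega)
  obtain ⟨γ, hγ⟩ : ∃ γ, C γ = (basis K d f).repr g i₁ := by
    rw [← natDegree_eq_zero]
    rcases hdeg i₁ with h | h
    · simpa [i₁, NeZero.ne d] using h
    · rw [h, natDegree_zero]
  refine ⟨(basis K d f).repr g 0, γ, ?_, ?_⟩
  · rcases hdeg 0 with h | h
    · simpa using h
    · simp [h]
  · conv_lhs => rw [← (basis K d f).sum_repr g]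
    have hne : (0 : Fin d) ≠ i₁ := fun h ↦ by simpa [i₁] using congrArg Fin.val h
    rw [Fintype.sum_eq_add 0 i₁ hne fun i hi ↦ by rw [hrepr i hi, zero_smul], ← hγ, basis_apply,
      basis_apply, Fin.val_zero, pow_zero, pow_one, Algebra.algebraMap_eq_smul_one,
      Algebra.smul_def (C γ)]

theorem norm_algebraMap [NeZero d] (p : K[X]) :
    Algebra.norm K[X] (algebraMap K[X] (CurveRing K d f) p) = p ^ d := by
  rw [Algebra.norm_algebraMap_of_basis (basis K d f), Fintype.card_fin]

theorem norm_algebraMap_sub_root [NeZero d] (l : K[X]) :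
    Algebra.norm K[X] (algebraMap K[X] (CurveRing K d f) l - AdjoinRoot.root _) = l ^ d - f := by
  rw [_root_.norm_algebraMap_sub_root (monic_X_pow_sub_C f (NeZero.ne d)), eval_sub,
    eval_X_pow, eval_C]

section Evaluation

variable {L : Type*} [CommRing L] [Algebra K L]

/-- Evaluation of functions at a point `(a, c)` of the curve with coordinates in an extension of
`K`. -/
noncomputable def evalAt (a c : L) (h : c ^ d = aeval a f) : CurveRing K d f →ₐ[K] L :=
  AdjoinRoot.liftAlgHom _ (aeval a) c <| by
    rw [eval₂_sub, eval₂_X_pow, eval₂_C]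
    exact sub_eq_zero.2 h

variable {a c : L} (h : c ^ d = aeval a f)

@[simp]
theorem evalAt_of (p : K[X]) : evalAt a c h (AdjoinRoot.of _ p) = aeval a p :=
  AdjoinRoot.liftAlgHom_of ..

@[simp]
theorem evalAt_root : evalAt a c h (AdjoinRoot.root _) = c :=
  AdjoinRoot.liftAlgHom_root ..

end Evaluation

section PointIdeal

variable {a c : K}

theorem ptIdeal_eq_sup : ptIdeal d f a c = Ideal.span {algebraMap K[X] _ (X - C a)} ⊔
    Ideal.span {AdjoinRoot.root _ - algebraMap K[X] _ (C c)} := by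
  rw [ptIdeal, Ideal.span_insert]
  rfl

theorem algebraMap_X_sub_C_mem_ptIdeal : algebraMap K[X] _ (X - C a) ∈ ptIdeal d f a c :=
  Ideal.subset_span (Set.mem_insert _ _)

theorem root_sub_algebraMap_C_mem_ptIdeal :
    AdjoinRoot.root _ - algebraMap K[X] _ (C c) ∈ ptIdeal d f a c :=
  Ideal.subset_span (Set.mem_insert_of_mem _ rfl)

theorem ker_evalAt (h : c ^ d = aeval a f) : RingHom.ker (evalAt a c h) = ptIdeal d f a c := by
  refine le_antisymm (fun g hg ↦ ?_) ?_
  · have hC (b : K) : algebraMap K (CurveRing K d f ⧸ ptIdeal d f a c) b =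
        Ideal.Quotient.mk _ (AdjoinRoot.of _ (C b)) := rfl
    have hmk : Ideal.Quotient.mkₐ K (ptIdeal d f a c) =
        (Algebra.ofId K _).comp (evalAt a c h) := by
      refine AdjoinRoot.algHom_ext' (Polynomial.algHom_ext ?_) ?_
      · have hX : AdjoinRoot.of _ X - AdjoinRoot.of _ (C a) ∈ ptIdeal d f a c :=
          map_sub (AdjoinRoot.of _) X (C a) ▸ algebraMap_X_sub_C_mem_ptIdeal
        simpa [hC] using Ideal.Quotient.eq.2 hX
      · simpa [hC] using Ideal.Quotient.eq.2 root_sub_algebraMap_C_mem_ptIdeal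
    rw [← Ideal.Quotient.eq_zero_iff_mem, ← Ideal.Quotient.mkₐ_eq_mk K, hmk, AlgHom.comp_apply,
      RingHom.mem_ker.1 hg, map_zero]
  · simp [ptIdeal_eq_sup, RingHom.mem_ker]

theorem isMaximal_ptIdeal (h : c ^ d = aeval a f) : (ptIdeal d f a c).IsMaximal :=
  ker_evalAt h ▸ RingHom.ker_isMaximal_of_surjective _ fun b ↦
    ⟨algebraMap K _ b, AlgHom.commutes _ b⟩

theorem ptIdeal_liesOver (h : c ^ d = aeval a f) :
    (ptIdeal d f a c).LiesOver (Ideal.span {X - C a} : Ideal K[X]) := by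
  refine ⟨?_⟩
  rw [← ker_evalAt h, ← ker_evalRingHom]
  ext p
  simp [RingHom.mem_ker]

theorem isMaximal_span_X_sub_C : (Ideal.span {X - C a} : Ideal K[X]).IsMaximal :=
  PrincipalIdealRing.isMaximal_of_irreducible (irreducible_X_sub_C a)

theorem algebraMap_quotient_ptIdeal_surjective (h : c ^ d = aeval a f) :
    Function.Surjective (algebraMap K[X] (CurveRing K d f ⧸ ptIdeal d f a c)) := by
  intro x
  obtain ⟨g, rfl⟩ := Ideal.Quotient.mk_surjective x
  refine ⟨C (evalAt a c h g), Ideal.Quotient.eq.2 ?_⟩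
  simp [← ker_evalAt h, RingHom.mem_ker]

theorem relNorm_ptIdeal [CharZero K] [NeZero d] [IsDedekindDomain (CurveRing K d f)]
    (h : c ^ d = aeval a f) :
    Ideal.relNorm K[X] (ptIdeal d f a c) = Ideal.span {X - C a} := by
  have := isMaximal_ptIdeal h
  have := ptIdeal_liesOver h
  have := isMaximal_span_X_sub_C (a := a)
  exact relNorm_eq_of_surjective _ (algebraMap_quotient_ptIdeal_surjective h)

theorem associated_norm_of_ptIdeal_pow_eq [CharZero K] [NeZero d]
    [IsDedekindDomain (CurveRing K d f)] (h : c ^ d = aeval a f) {k : ℕ} {g : CurveRing K d f}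
    (hg : ptIdeal d f a c ^ k = Ideal.span {g}) :
    Associated (Algebra.norm K[X] g) ((X - C a) ^ k) := by
  rw [← Ideal.span_singleton_eq_span_singleton, ← relNorm_span_singleton_eq_norm, ← hg, map_pow,
    relNorm_ptIdeal h, Ideal.span_singleton_pow]

theorem ptIdeal_pow_eq_of_associated_norm [CharZero K] [NeZero d]
    [IsDedekindDomain (CurveRing K d f)] (h : c ^ d = aeval a f) {k N : ℕ} {g : CurveRing K d f}
    (hle : ptIdeal d f a c ^ N ≤ Ideal.span {g})
    (hg : Associated (Algebra.norm K[X] g) ((X - C a) ^ k)) :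
    ptIdeal d f a c ^ k = Ideal.span {g} := by
  have := (isMaximal_ptIdeal h).isPrime
  refine (eq_pow_of_relNorm_eq_pow (R := K[X]) ?_ hle ?_).symm
  · rw [relNorm_ptIdeal h]
    exact Ideal.prime_span_singleton_iff.2 (prime_X_sub_C a)
  · rwa [relNorm_ptIdeal h, relNorm_span_singleton_eq_norm, Ideal.span_singleton_pow,
      Ideal.span_singleton_eq_span_singleton]

-- If `p` generates a power of the ideal of `(a, c)`, then `p` also vanishes at `(a, ζ c)` for every
-- `d`-th root of unity `ζ`, hence so does `y - c`.
theorem eq_zero_of_ptIdeal_pow_eq_span_algebraMap [CharZero K] (hd : 2 ≤ d)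
    (h : c ^ d = aeval a f) {k : ℕ} (hk : k ≠ 0) {p : K[X]}
    (hp : ptIdeal d f a c ^ k = Ideal.span {algebraMap K[X] _ p}) :
    c = 0 := by
  have : NeZero d := ⟨by omega⟩
  let L := AlgebraicClosure K
  obtain ⟨ζ, hζ⟩ := HasEnoughRootsOfUnity.exists_primitiveRoot L d
  have hpa : aeval a p = 0 := by
    have hmem : algebraMap K[X] _ p ∈ ptIdeal d f a c :=
      Ideal.pow_le_self hk (hp ▸ Ideal.mem_span_singleton_self _)
    rw [← ker_evalAt h] at hmem
    simpa [RingHom.mem_ker] using hmem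
  obtain ⟨w, hw⟩ : algebraMap K[X] (CurveRing K d f) p ∣
      (AdjoinRoot.root _ - algebraMap K[X] _ (C c)) ^ k := by
    rw [← Ideal.mem_span_singleton, ← hp]
    exact Ideal.pow_mem_pow root_sub_algebraMap_C_mem_ptIdeal k
  have h' : (ζ * algebraMap K L c) ^ d = aeval (algebraMap K L a) f := by
    rw [mul_pow, hζ.pow_eq_one, one_mul, ← map_pow, h, aeval_algebraMap_apply]
  have hfactor : (ζ - 1) * algebraMap K L c = 0 := by
    rw [sub_one_mul, ← pow_eq_zero_iff hk]
    simpa [hpa, aeval_algebraMap_apply] using congrArg (evalAt _ _ h') hw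
  rw [mul_eq_zero, sub_eq_zero, map_eq_zero] at hfactor
  exact hfactor.resolve_left (hζ.ne_one hd)

end PointIdeal

section Torsion

variable [CharZero K] [IsDedekindDomain (CurveRing K d f)] {a c : K}

theorem ptIdeal_zero_pow [NeZero d] (h : 0 ^ d = aeval a f) :
    ptIdeal d f a 0 ^ d = Ideal.span {algebraMap K[X] _ (X - C a)} := by
  refine ptIdeal_pow_eq_of_associated_norm (N := 1 + d) h ?_ ?_
  · rw [ptIdeal_eq_sup, map_zero, map_zero, sub_zero]
    refine sup_span_singleton_pow_le le_rfl ?_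
    rw [root_pow, Ideal.mem_span_singleton]
    refine map_dvd _ (dvd_iff_isRoot.2 ?_)
    rw [IsRoot, ← coe_aeval_eq_eval, ← h, zero_pow (NeZero.ne d)]
  · rw [norm_algebraMap]

theorem ptIdeal_pow_eq_span_algebraMap_sub_root [NeZero d] (h : c ^ d = aeval a f) {l : K[X]}
    {k : ℕ} (hla : l.eval a = c) (hl : Associated (f - l ^ d) ((X - C a) ^ k)) :
    ptIdeal d f a c ^ k = Ideal.span {algebraMap K[X] _ l - AdjoinRoot.root _} := by
  set g : CurveRing K d f := algebraMap K[X] _ l - AdjoinRoot.root _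
  have hle : ptIdeal d f a c ≤ Ideal.span {g} ⊔ Ideal.span {algebraMap K[X] _ (X - C a)} := by
    have hdvd : X - C a ∣ l - C c := by
      rw [dvd_iff_isRoot, IsRoot, eval_sub, eval_C, hla, sub_self]
    have hroot : AdjoinRoot.root _ - algebraMap K[X] _ (C c) =
        algebraMap K[X] _ (l - C c) - g := by
      rw [map_sub]
      ring
    rw [ptIdeal_eq_sup, hroot]
    refine sup_le le_sup_right ((Ideal.span_singleton_le_iff_mem _).2 ?_)
    refine sub_mem (Ideal.mem_sup_right ?_) (Ideal.mem_sup_left ?_)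
    · exact Ideal.mem_span_singleton.2 (map_dvd _ hdvd)
    · exact Ideal.mem_span_singleton_self g
  refine ptIdeal_pow_eq_of_associated_norm (N := 1 + k) h
    ((Ideal.pow_right_mono hle _).trans (sup_span_singleton_pow_le le_rfl ?_)) ?_
  · rw [Ideal.mem_span_singleton, ← map_pow]
    have hdvd : g ∣ algebraMap K[X] _ (f - l ^ d) := by
      rw [map_sub, map_pow, ← root_pow, ← neg_dvd, neg_sub]
      exact sub_dvd_pow_sub_pow _ _ d
    exact hdvd.trans (map_dvd _ hl.dvd)
  · rw [norm_algebraMap_sub_root, ← neg_sub]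
    exact hl.neg_left

theorem natDegree_norm_of_ptIdeal_pow_eq_span [NeZero d] (h : c ^ d = aeval a f) {k : ℕ}
    {g : CurveRing K d f} (hg : ptIdeal d f a c ^ k = Ideal.span {g}) :
    (Algebra.norm K[X] g).natDegree = k := by
  rw [natDegree_eq_of_degree_eq
    (degree_eq_degree_of_associated (associated_norm_of_ptIdeal_pow_eq h hg)), natDegree_pow,
    natDegree_X_sub_C, mul_one]

theorem eq_zero_of_isPrincipal_ptIdeal_pow (hd : 2 ≤ d) (hcop : d.Coprime f.natDegree)
    (h : c ^ d = aeval a f) {k : ℕ} (hk : k ≠ 0) (hkf : k < f.natDegree)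
    (hP : (ptIdeal d f a c ^ k).IsPrincipal) : c = 0 := by
  have : NeZero d := ⟨by omega⟩
  obtain ⟨g, hg⟩ := hP
  rw [Ideal.submodule_span_eq] at hg
  have hdeg := natDegree_norm_of_ptIdeal_pow_eq_span h hg
  have hf : f ≠ 0 := ne_zero_of_natDegree_gt hkf
  rw [eq_algebraMap_of_natDegree_norm_lt hf hcop (hdeg.trans_lt hkf)] at hg
  exact eq_zero_of_ptIdeal_pow_eq_span_algebraMap hd h hk hg

theorem exists_ptIdeal_pow_eq_span_algebraMap_sub_root (hd : 2 ≤ d) (hf : f.natDegree = d + 1)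
    (h : c ^ d = aeval a f) (hP : (ptIdeal d f a c ^ (d + 1)).IsPrincipal) :
    ∃ l : K[X], l.natDegree ≤ 1 ∧
      ptIdeal d f a c ^ (d + 1) = Ideal.span {algebraMap K[X] _ l - AdjoinRoot.root _} := by
  have : NeZero d := ⟨by omega⟩
  obtain ⟨g, hg⟩ := hP
  rw [Ideal.submodule_span_eq] at hg
  have hf₀ : f ≠ 0 := ne_zero_of_natDegree_gt (d.lt_succ_self.trans_eq hf.symm)
  have hdeg := natDegree_norm_of_ptIdeal_pow_eq_span h hg
  obtain ⟨p, γ, hp, rfl⟩ := exists_eq_add_mul_root_of_natDegree_norm_le hd hf₀ (by simp [hf])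
    (hdeg.trans_le hf.ge)
  have hγ : γ ≠ 0 := by
    rintro rfl
    rw [map_zero, map_zero, zero_mul, add_zero, norm_algebraMap, natDegree_pow] at hdeg
    have hdvd : d ∣ 1 := (Nat.dvd_add_right dvd_rfl).1 ⟨_, hdeg.symm⟩
    exact absurd (Nat.dvd_one.1 hdvd) (by omega)
  have hunit : IsUnit (algebraMap K[X] (CurveRing K d f) (C (-γ))) :=
    (isUnit_C.2 (neg_ne_zero.2 hγ).isUnit).map _
  refine ⟨C (-γ⁻¹) * p, (natDegree_C_mul_le _ _).trans ?_, ?_⟩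
  · by_contra! hlt
    have := Nat.mul_le_mul_left d hlt
    omega
  · have hfactor : algebraMap K[X] _ p + algebraMap K[X] _ (C γ) * AdjoinRoot.root _ =
        (algebraMap K[X] _ (C (-γ⁻¹) * p) - AdjoinRoot.root _) *
          algebraMap K[X] (CurveRing K d f) (C (-γ)) := by
      have hC : C (-γ⁻¹) * p * C (-γ) = p := by
        rw [mul_right_comm, ← C_mul, neg_mul_neg, inv_mul_cancel₀ hγ, C_1, one_mul]
      rw [sub_mul, ← map_mul, hC, C_neg, map_neg]
      ring
    rw [hg, hfactor, Ideal.span_singleton_mul_right_unit hunit]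

theorem ptIdeal_pow_eq_span_algebraMap_sub_root_iff [NeZero d] (h : c ^ d = aeval a f) {l : K[X]}
    {k : ℕ} (hk : k ≠ 0) :
    ptIdeal d f a c ^ k = Ideal.span {algebraMap K[X] _ l - AdjoinRoot.root _} ↔
      l.eval a = c ∧ Associated (f - l ^ d) ((X - C a) ^ k) := by
  refine ⟨fun hP ↦ ⟨?_, ?_⟩, fun ⟨hla, hl⟩ ↦ ptIdeal_pow_eq_span_algebraMap_sub_root h hla hl⟩
  · have hmem := Ideal.pow_le_self hk (hP.symm ▸ Ideal.mem_span_singleton_self _)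
    rw [← ker_evalAt h] at hmem
    simpa [RingHom.mem_ker, sub_eq_zero] using hmem
  · have hnorm := associated_norm_of_ptIdeal_pow_eq h hP
    rw [norm_algebraMap_sub_root, ← neg_sub] at hnorm
    exact (Associated.neg_left_iff).1 hnorm

theorem isTorsionOfOrder_succ_iff (hd : 2 ≤ d) (hf : f.natDegree = d + 1)
    (h : c ^ d = aeval a f) :
    IsTorsionOfOrder d f a c (d + 1) ↔ c ≠ 0 ∧ ∃ l : K[X], l.natDegree ≤ 1 ∧ l.eval a = c ∧
      Associated (f - l ^ d) ((X - C a) ^ (d + 1)) := by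
  have : NeZero d := ⟨by omega⟩
  simp only [← ptIdeal_pow_eq_span_algebraMap_sub_root_iff h d.succ_ne_zero]
  constructor
  · rintro ⟨⟨-, hP⟩, hmin⟩
    refine ⟨?_, exists_ptIdeal_pow_eq_span_algebraMap_sub_root hd hf h hP⟩
    rintro rfl
    exact d.lt_succ_self.not_ge (hmin ⟨NeZero.pos d, _, ptIdeal_zero_pow h⟩)
  · rintro ⟨hc, l, -, hP⟩
    refine ⟨⟨d.succ_pos, _, hP⟩, fun k hk ↦ ?_⟩
    by_contra! hlt
    exact hc (eq_zero_of_isPrincipal_ptIdeal_pow hd (by simp [hf]) h hk.1.ne' (hf ▸ hlt) hk.2)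

theorem eq_of_isTorsionOfOrder_succ (hd : 4 ≤ d) (hf : f.natDegree = d + 1) {b e : K}
    (h : c ^ d = aeval a f) (h' : e ^ d = aeval b f) (hP : IsTorsionOfOrder d f a c (d + 1))
    (hQ : IsTorsionOfOrder d f b e (d + 1)) : a = b := by
  obtain ⟨-, l, hl, -, hla⟩ := (isTorsionOfOrder_succ_iff (by omega) hf h).1 hP
  obtain ⟨-, q, hq, -, hqb⟩ := (isTorsionOfOrder_succ_iff (by omega) hf h').1 hQ
  have hlead : f.coeff (d + 1) ≠ 0 :=
    hf ▸ leadingCoeff_ne_zero.2 (ne_zero_of_natDegree_gt (d.lt_succ_self.trans_eq hf.symm))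
  have heq := (eq_C_coeff_mul_X_sub_C_pow_add_pow hl hla).symm.trans
    (eq_C_coeff_mul_X_sub_C_pow_add_pow hq hqb)
  rw [eq_X_add_C_of_natDegree_le_one hl, eq_X_add_C_of_natDegree_le_one hq] at heq
  exact eq_of_X_sub_C_pow_add_linear_pow_eq hd hlead heq

theorem isTorsionOfOrder_succ_mul_of_pow_eq_one (hd : 2 ≤ d) (hf : f.natDegree = d + 1)
    (h : c ^ d = aeval a f) {η : K} (hη : η ^ d = 1) (hP : IsTorsionOfOrder d f a c (d + 1)) :
    IsTorsionOfOrder d f a (η * c) (d + 1) := by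
  have hη₀ : η ≠ 0 := (IsUnit.of_pow_eq_one hη (by omega)).ne_zero
  obtain ⟨hc, l, hl, rfl, hla⟩ := (isTorsionOfOrder_succ_iff hd hf h).1 hP
  refine (isTorsionOfOrder_succ_iff hd hf (by rw [mul_pow, hη, one_mul, h])).2
    ⟨mul_ne_zero hη₀ hc, C η * l, (natDegree_C_mul_le _ _).trans hl, by simp, ?_⟩
  rwa [mul_pow, ← C_pow, hη, C_1, one_mul]

variable (d f) in
/-- The `K`-points of the affine curve `y ^ d = f(x)` that are torsion of order exactly `m`. -/
def torsionPoints (m : ℕ) : Set (K × K) :=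
  {P | P.2 ^ d = f.eval P.1 ∧ IsTorsionOfOrder d f P.1 P.2 m}

theorem torsionPoints_succ_eq_range (hd : 4 ≤ d) (hf : f.natDegree = d + 1) {P : K × K}
    (hP : P ∈ torsionPoints d f (d + 1)) : torsionPoints d f (d + 1) =
      Set.range fun η : rootsOfUnity d K ↦ (P.1, ((η : Kˣ) : K) * P.2) := by
  have : NeZero d := ⟨by omega⟩
  obtain ⟨a, c⟩ := P
  obtain ⟨h, htor⟩ : c ^ d = aeval a f ∧ IsTorsionOfOrder d f a c (d + 1) := hP
  ext ⟨b, e⟩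
  constructor
  · rintro ⟨h', htor'⟩
    obtain rfl := eq_of_isTorsionOfOrder_succ hd hf h h' htor htor'
    have hc := ((isTorsionOfOrder_succ_iff (by omega) hf h).1 htor).1
    have hpow : (e / c) ^ d = 1 := by
      rw [div_pow, div_eq_one_iff_eq (pow_ne_zero d hc), h]
      exact h'
    exact ⟨rootsOfUnity.mkOfPowEq _ hpow, Prod.ext rfl (div_mul_cancel₀ e hc)⟩
  · rintro ⟨η, hη⟩
    obtain ⟨rfl, rfl⟩ := Prod.mk.inj hη
    have hpow : ((η : Kˣ) : K) ^ d = 1 := (mem_rootsOfUnity' d _).1 η.2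
    exact ⟨by simpa [mul_pow, hpow] using h,
      isTorsionOfOrder_succ_mul_of_pow_eq_one (by omega) hf h hpow htor⟩

theorem ncard_torsionPoints_succ (hd : 4 ≤ d) (hf : f.natDegree = d + 1)
    (hne : (torsionPoints d f (d + 1)).Nonempty) :
    (torsionPoints d f (d + 1)).ncard = Nat.card (rootsOfUnity d K) := by
  obtain ⟨⟨a, c⟩, hP⟩ := hne
  have hc : c ≠ 0 := ((isTorsionOfOrder_succ_iff (by omega) hf hP.1).1 hP.2).1
  rw [torsionPoints_succ_eq_range hd hf hP]
  refine Set.ncard_range_of_injective fun η θ hηθ ↦ ?_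
  exact Subtype.ext (Units.ext (mul_right_cancel₀ hc (Prod.mk.inj hηθ).2))

end Torsion

end CurveRing

theorem stmt_11_general {K : Type*} [Field K] [CharZero K] {d : ℕ} (hd : 4 ≤ d) {f : K[X]}
    (hdeg : f.natDegree = d + 1) [IsDedekindDomain (CurveRing K d f)] :
    CurveRing.torsionPoints d f (d + 1) = ∅ ∨
      (CurveRing.torsionPoints d f (d + 1)).ncard = Nat.card (rootsOfUnity d K) :=
  (Set.eq_empty_or_nonempty _).imp_right (CurveRing.ncard_torsionPoints_succ hd hdeg)

theorem stmt_11 {K : Type*} [Field K] [IsAlgClosed K] [CharZero K] (d n : ℕ)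
    (hn : 5 ≤ n) (hd : d = n - 1)
    (f : K[X]) (hmonic : f.Monic) (hdeg : f.natDegree = n) (hsqf : Squarefree f)
    (hDed : IsDedekindDomain (CurveRing K d f)) :
    {P : K × K | P.2 ^ d = f.eval P.1 ∧ IsTorsionOfOrder d f P.1 P.2 n}.ncard = 0 ∨
    {P : K × K | P.2 ^ d = f.eval P.1 ∧ IsTorsionOfOrder d f P.1 P.2 n}.ncard = n - 1 := by
  obtain rfl : n = d + 1 := by omega
  have : NeZero d := ⟨by omega⟩
  rcases stmt_11_general (by omega) hdeg with hempty | hcard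
  · exact .inl ((congrArg Set.ncard hempty).trans (Set.ncard_empty _))
  · exact .inr (hcard.trans (HasEnoughRootsOfUnity.natCard_rootsOfUnity K d))
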